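/- arXiv:2508.18402 — 4 statements merged into one kernel-verified Lean document; each statement's English description precedes it below -/
import Mathlib

section
/- Let η ∈ {1,2} and let q, r, s be primes with q ≡ 3 (mod 4), r ≡ s ≡ 5 (mod 8), Legendre symbols (q/r) = (q/s) = (−1)^{δ_{η,2}} and (r/s) = 1, and let (γ, γ′) be the fundamental solution of X² − ηqrs·Y² = 1. Then exactly one of the three natural numbers 2^{δ_{η,1}}·q·(γ−1), 2r·(γ+(−1)^{δ_{η,2}}), and 2s·(γ+(−1)^{δ_{η,2}}) is a perfect square. -/
/-!
Write `D = ηqrs`. When `γ` is odd, `(γ + 1) / 2` and `(γ - 1) / 2` are coprime with product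
`D * (γ' / 2) ^ 2`, so they are `d * a ^ 2` and `e * b ^ 2` for some factorization `D = d * e`,
and `d * a ^ 2 - e * b ^ 2 = 1`. Legendre symbols modulo `r` show that `γ` is odd when `η = 1`, and
that `2` and `q` divide the same factor when `η = 2`. Congruences modulo `4` and `8` and the
minimality of `γ`, which forbids `d = 1`, then leave three factorizations, one for each of the three
numbers. Two of these numbers cannot both be squares, since their product is a square times `r`,
`s`, `rs`, `2qr` or `2qs`.
-/

open Pell

section SquareClasses

theorem exists_eq_mul_sq_of_coprime {m n D k : ℕ} (hmn : m.Coprime n) (hD : D ≠ 0)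
    (h : m * n = D * k ^ 2) :
    ∃ d e a b : ℕ, d * e = D ∧ m = d * a ^ 2 ∧ n = e * b ^ 2 := by
  have hgcd : D.gcd m * D.gcd n = D := by
    rw [← hmn.gcd_mul D, h]
    exact Nat.gcd_eq_left (Dvd.intro _ rfl)
  obtain ⟨u, hu⟩ := D.gcd_dvd_right m
  obtain ⟨v, hv⟩ := D.gcd_dvd_right n
  have huv : u * v = k ^ 2 := by
    apply Nat.eq_of_mul_eq_mul_left (Nat.pos_of_ne_zero hD)
    calc D * (u * v) = D.gcd m * D.gcd n * (u * v) := by rw [hgcd]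
      _ = D.gcd m * u * (D.gcd n * v) := by ring
      _ = D * k ^ 2 := by rw [← hu, ← hv, h]
  have hcop : u.Coprime v := hmn.of_dvd (Dvd.intro_left _ hu.symm) (Dvd.intro_left _ hv.symm)
  obtain ⟨a, rfl⟩ := exists_eq_pow_of_mul_eq_pow (Nat.isUnit_iff.2 hcop) huv
  obtain ⟨b, rfl⟩ := exists_eq_pow_of_mul_eq_pow (Nat.isUnit_iff.2 hcop.symm)
    ((mul_comm _ _).trans huv)
  exact ⟨_, _, a, b, hgcd, hu, hv⟩

theorem not_isSquare_prime_mul {p m : ℤ} (hp : Prime p) (hm : ¬p ∣ m) : ¬IsSquare (p * m) := by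
  rintro ⟨c, hc⟩
  obtain ⟨x, rfl⟩ : p ∣ c := hp.dvd_of_dvd_pow (n := 2) ⟨m, by rw [hc, sq]⟩
  exact hm ⟨x * x, mul_left_cancel₀ hp.ne_zero (by rw [hc]; ring)⟩

theorem not_isSquare_and_isSquare {p m z u v : ℤ} (hp : Prime p) (hm : ¬p ∣ m) (hz : z ≠ 0)
    (h : u * v = p * m * z ^ 2) : ¬(IsSquare u ∧ IsSquare v) := by
  rintro ⟨hu, hv⟩
  obtain ⟨w, hw⟩ := (hu.mul hv).exists_sq
  obtain ⟨c, rfl⟩ : z ∣ w := (Int.pow_dvd_pow_iff two_ne_zero).1 ⟨p * m, by rw [← hw, h]; ring⟩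
  exact not_isSquare_prime_mul hp hm
    ⟨c, mul_right_cancel₀ (pow_ne_zero 2 hz) (by rw [← h, hw]; ring)⟩

end SquareClasses

section Factorizations

theorem mul_eq_prime_mul_cases {p d e m : ℕ} (hp : p.Prime) (h : d * e = p * m) :
    (∃ x, d = p * x ∧ x * e = m) ∨ (∃ x, e = p * x ∧ d * x = m) := by
  rcases hp.dvd_mul.1 (Dvd.intro _ h.symm) with ⟨x, rfl⟩ | ⟨x, rfl⟩
  · exact .inl ⟨x, rfl, Nat.eq_of_mul_eq_mul_left hp.pos (by rw [← h]; ring)⟩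
  · exact .inr ⟨x, rfl, Nat.eq_of_mul_eq_mul_left hp.pos (by rw [← h]; ring)⟩

theorem mul_eq_prime_mul_prime_cases {p q d e : ℕ} (hp : p.Prime) (hq : q.Prime)
    (h : d * e = p * q) :
    (d = 1 ∧ e = p * q) ∨ (d = p ∧ e = q) ∨ (d = q ∧ e = p) ∨ (d = p * q ∧ e = 1) := by
  rcases mul_eq_prime_mul_cases hp h with ⟨x, rfl, hx⟩ | ⟨x, rfl, hx⟩ <;>
    rcases Nat.prime_mul_iff.1 (hx ▸ hq) with ⟨-, rfl⟩ | ⟨-, rfl⟩ <;> simp_all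

theorem not_natCast_dvd_of_prime_of_ne {p q : ℕ} (hp : p.Prime) (hq : q.Prime) (hpq : p ≠ q) :
    ¬(p : ℤ) ∣ q :=
  fun h ↦ hpq ((Nat.prime_dvd_prime_iff_eq hp hq).1 (Int.natCast_dvd_natCast.1 h))

end Factorizations

section LegendreSymbol

variable {p : ℕ} [Fact p.Prime]

theorem legendreSym_two_of_mod_eight_eq_five (hp : p % 8 = 5) : legendreSym p 2 = -1 := by
  rw [legendreSym.at_two (by rintro rfl; omega), ZMod.χ₈_nat_mod_eight, hp]
  rfl

theorem legendreSym_neg_of_mod_four_eq_one (hp : p % 4 = 1) (n : ℤ) :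
    legendreSym p (-n) = legendreSym p n := by
  rw [legendreSym.at_neg (by rintro rfl; omega), ZMod.χ₄_nat_one_mod_four hp, one_mul]

theorem ne_of_legendreSym_eq_one {q : ℕ} (h : legendreSym p q = 1) : p ≠ q := by
  rintro rfl
  simp [(legendreSym.eq_zero_iff p p).2] at h

theorem legendreSym_eq_one_of_forall_prime_dvd {n : ℕ}
    (h : ∀ l : ℕ, l.Prime → l ∣ n → legendreSym p l = 1) : legendreSym p n = 1 := by
  induction n using induction_on_primes with
  | zero => exact absurd rfl (ne_of_legendreSym_eq_one (h p Fact.out (dvd_zero p)))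
  | one => simp
  | prime_mul l n hl ih =>
    rw [Nat.cast_mul, legendreSym.mul, h l hl (dvd_mul_right l n),
      ih fun k hk hkn ↦ h k hk (hkn.mul_left l), one_mul]

theorem legendreSym_eq_of_mul_sq_sub_mul_sq_eq {d e a b v : ℤ} (h : d * a ^ 2 - e * b ^ 2 = v)
    (he : (p : ℤ) ∣ e) (hv : legendreSym p v ≠ 0) : legendreSym p d = legendreSym p v := by
  have hmod : (v : ZMod p) = (d * a ^ 2 : ℤ) := by
    simp [← h, (ZMod.intCast_zmod_eq_zero_iff_dvd e p).2 he]
  have ha : (a : ZMod p) ≠ 0 := fun ha ↦ hv <| by simp [legendreSym.eq_zero_iff, hmod, ha]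
  have hv_eq : legendreSym p v = legendreSym p (d * a ^ 2) := by simp only [legendreSym, hmod]
  rw [hv_eq, legendreSym.mul, legendreSym.sq_one' p ha, mul_one]

theorem mul_sq_sub_mul_sq_ne_of_legendreSym_ne (hp : p % 4 = 1) {t x y : ℕ} {m n v a b : ℤ}
    (ht : ∀ l : ℕ, l.Prime → l ∣ t → legendreSym p l = 1) (hxy : x * y = p * t)
    (hv : legendreSym p v ≠ 0) (hm : legendreSym p m ≠ legendreSym p v)
    (hn : legendreSym p n ≠ legendreSym p v) : m * x * a ^ 2 - n * y * b ^ 2 ≠ v := by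
  intro h
  have residue_of_dvd {z : ℕ} (hz : z ∣ t) : legendreSym p z = 1 :=
    legendreSym_eq_one_of_forall_prime_dvd fun l hl hlz ↦ ht l hl (hlz.trans hz)
  rcases mul_eq_prime_mul_cases Fact.out hxy with ⟨z, rfl, hz⟩ | ⟨z, rfl, hz⟩
  · have h' : -(n * y) * b ^ 2 - -(m * (p * z : ℕ)) * a ^ 2 = v := by rw [← h]; ring
    have key := legendreSym_eq_of_mul_sq_sub_mul_sq_eq h'
      (dvd_neg.2 ⟨m * z, by push_cast; ring⟩) hv
    rw [legendreSym_neg_of_mod_four_eq_one hp, legendreSym.mul,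
      residue_of_dvd (Dvd.intro_left _ hz), mul_one] at key
    exact hn key
  · have key := legendreSym_eq_of_mul_sq_sub_mul_sq_eq h ⟨n * z, by push_cast; ring⟩ hv
    rw [legendreSym.mul, residue_of_dvd (Dvd.intro _ hz), mul_one] at key
    exact hm key

end LegendreSymbol

section Congruences

variable {d e a b : ℤ}

theorem mod_four_ne_three_of_mul_sq_sub_mul_sq_eq_one (h : d * a ^ 2 - e * b ^ 2 = 1)
    (he : e % 4 = 1) : d % 4 ≠ 3 := by
  intro hd
  have hd' : (d : ZMod 4) = 3 := (ZMod.intCast_eq_intCast_iff d 3 4).2 hd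
  have he' : (e : ZMod 4) = 1 := by simpa using (ZMod.intCast_eq_intCast_iff e 1 4).2 he
  have key : ∀ x y : ZMod 4, 3 * x ^ 2 - 1 * y ^ 2 ≠ 1 := by decide
  exact key a b (by simpa [hd', he'] using congrArg (Int.cast : ℤ → ZMod 4) h)

theorem mod_eight_of_mul_sq_sub_mul_sq_eq_one_of_left (h : d * a ^ 2 - e * b ^ 2 = 1)
    (hd : d % 8 = 6) : e % 8 = 5 ∨ e % 8 = 7 := by
  have hd' : (d : ZMod 8) = 6 := (ZMod.intCast_eq_intCast_iff d 6 8).2 hd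
  have key : ∀ x y z : ZMod 8, 6 * x ^ 2 - z * y ^ 2 = 1 → z = 5 ∨ z = 7 := by decide
  exact (key a b e (by simpa [hd'] using congrArg (Int.cast : ℤ → ZMod 8) h)).imp
    (ZMod.intCast_eq_intCast_iff e 5 8).1 (ZMod.intCast_eq_intCast_iff e 7 8).1

theorem mod_eight_of_mul_sq_sub_mul_sq_eq_one_of_right (h : d * a ^ 2 - e * b ^ 2 = 1)
    (he : e % 8 = 6) : d % 8 = 1 ∨ d % 8 = 7 := by
  have he' : (e : ZMod 8) = 6 := (ZMod.intCast_eq_intCast_iff e 6 8).2 he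
  have key : ∀ x y z : ZMod 8, z * x ^ 2 - 6 * y ^ 2 = 1 → z = 1 ∨ z = 7 := by decide
  exact (key a b d (by simpa [he'] using congrArg (Int.cast : ℤ → ZMod 8) h)).imp
    (fun h1 ↦ (ZMod.intCast_eq_intCast_iff d 1 8).1 (by simpa using h1))
    (ZMod.intCast_eq_intCast_iff d 7 8).1

theorem two_mul_mul_mod_eight {m n : ℕ} (hm : m % 4 = 3) (hn : n % 4 = 1) :
    2 * (m * n) % 8 = 6 := by
  have : m * n % 4 = 3 := by simp [Nat.mul_mod, hm, hn]
  omega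

end Congruences

/-- A factorization `D = d * e` for which `(x + 1) / 2` is `d` times a square and `(x - 1) / 2` is
`e` times a square. It records the square class of `x + 1` for a solution of `x² - D y² = 1`.
The halves are cleared from the equations, so that they hold in `ℤ`. -/
structure PellSplitting (D : ℕ) (x : ℤ) (d e : ℕ) : Prop where
  mul_eq : d * e = D
  exists_add_one_eq : ∃ a : ℤ, x + 1 = 2 * d * a ^ 2
  exists_sub_one_eq : ∃ b : ℤ, x - 1 = 2 * e * b ^ 2

namespace PellSplitting

variable {D d e : ℕ} {x : ℤ}

theorem isSquare_add_one (h : PellSplitting D x d e) : IsSquare (2 * d * (x + 1)) := by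
  obtain ⟨a, ha⟩ := h.exists_add_one_eq
  exact ⟨2 * d * a, by rw [ha]; ring⟩

theorem isSquare_sub_one (h : PellSplitting D x d e) : IsSquare (2 * e * (x - 1)) := by
  obtain ⟨b, hb⟩ := h.exists_sub_one_eq
  exact ⟨2 * e * b, by rw [hb]; ring⟩

theorem exists_mul_sq_sub_mul_sq_eq_one (h : PellSplitting D x d e) :
    ∃ a b : ℤ, d * a ^ 2 - e * b ^ 2 = 1 := by
  obtain ⟨a, ha⟩ := h.exists_add_one_eq
  obtain ⟨b, hb⟩ := h.exists_sub_one_eq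
  exact ⟨a, b, by linarith⟩

end PellSplitting

section Pell

variable {D : ℕ} {g : Solution₁ (D : ℤ)}

-- If `d = 1`, then `(|a|, b)` is a solution with `|a| < 2 * a ^ 2 - 1 = g.x`.
theorem PellSplitting.left_ne_one_of_isFundamental {d e : ℕ} (h : PellSplitting D g.x d e)
    (hg : IsFundamental g) : d ≠ 1 := by
  rintro rfl
  obtain ⟨a, ha⟩ := h.exists_add_one_eq
  obtain ⟨b, hb⟩ := h.exists_sub_one_eq
  have hab : |a| ^ 2 - D * b ^ 2 = 1 := by
    rw [sq_abs, ← h.mul_eq]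
    push_cast at ha ⊢
    linarith
  have hx := hg.1
  have hsq : g.x + 1 = 2 * |a| ^ 2 := by rw [sq_abs, ha]; push_cast; ring
  have ha₁ : 1 < |a| := by by_contra! hle; nlinarith [abs_nonneg a]
  have hmin : g.x ≤ |a| := hg.x_le_x (a := Solution₁.mk |a| b hab) ha₁
  nlinarith

theorem even_y_of_odd_x (hD : ¬8 ∣ D) (hx : Odd g.x) : Even g.y := by
  by_contra hy
  have hcop : IsCoprime (8 : ℤ) (g.y ^ 2) := by
    have h2 : IsCoprime (2 : ℤ) g.y := (Int.isCoprime_two_left).2 (Int.not_even_iff_odd.1 hy)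
    simpa using h2.pow (m := 3) (n := 2)
  have hdvd : (8 : ℤ) ∣ D * g.y ^ 2 := g.prop_y ▸ Int.eight_dvd_sq_sub_one_of_odd hx
  exact hD (by exact_mod_cast hcop.dvd_of_dvd_mul_right hdvd)

theorem exists_pellSplitting (hD : ¬8 ∣ D) (hg : 0 < g.x) (hx : Odd g.x) :
    ∃ d e, PellSplitting D g.x d e := by
  obtain ⟨k, hk⟩ := (even_y_of_odd_x hD hx).two_dvd
  obtain ⟨n, hn⟩ : ∃ n : ℕ, g.x = 2 * n + 1 := ⟨(g.x / 2).toNat, by grind⟩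
  have hprod : (n + 1) * n = D * k.natAbs ^ 2 := by
    have hprop := g.prop
    rw [hn, hk] at hprop
    zify
    rw [sq_abs]
    linarith
  have hD₀ : D ≠ 0 := by rintro rfl; simp at hD
  obtain ⟨d, e, a, b, hde, ha, hb⟩ := exists_eq_mul_sq_of_coprime (by simp) hD₀ hprod
  zify at ha hb
  exact ⟨d, e, hde, ⟨a, by linarith⟩, ⟨b, by linarith⟩⟩

theorem exists_mul_sq_sub_mul_sq_eq_two (hg : 1 < g.x) (hx : Even g.x) :
    ∃ d e a b : ℕ, d * e = D ∧ (d * a ^ 2 - e * b ^ 2 : ℤ) = 2 := by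
  obtain ⟨n, hn⟩ : ∃ n : ℕ, g.x = 2 * n + 2 := ⟨(g.x / 2 - 1).toNat, by grind⟩
  have hprod : (2 * n + 1 + 2) * (2 * n + 1) = D * g.y.natAbs ^ 2 := by
    have hprop := g.prop
    rw [hn] at hprop
    zify
    rw [sq_abs]
    linarith
  have hcop : (2 * n + 1 + 2).Coprime (2 * n + 1) := by simp
  have hD : D ≠ 0 := by exact_mod_cast (Solution₁.d_pos_of_one_lt_x hg).ne'
  obtain ⟨d, e, a, b, hde, ha, hb⟩ := exists_eq_mul_sq_of_coprime hcop hD hprod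
  zify at ha hb
  exact ⟨d, e, a, b, hde, by linarith⟩

theorem odd_x_of_even (hD : Even D) : Odd g.x := by
  have hsq : Odd (g.x ^ 2) := by
    rw [g.prop_x]
    exact odd_one.add_even (((Int.even_coe_nat D).2 hD).mul_right _)
  exact (Int.odd_pow' two_ne_zero).1 hsq

theorem odd_x_of_forall_prime_dvd_legendreSym {p t : ℕ} [Fact p.Prime] (hp : p % 8 = 5)
    (ht : ∀ l : ℕ, l.Prime → l ∣ t → legendreSym p l = 1) (hD : D = p * t)
    (hg : 1 < g.x) : Odd g.x := by
  by_contra hx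
  obtain ⟨d, e, a, b, hde, h⟩ :=
    exists_mul_sq_sub_mul_sq_eq_two hg (Int.not_odd_iff_even.1 hx)
  have h2 := legendreSym_two_of_mod_eight_eq_five hp
  refine mul_sq_sub_mul_sq_ne_of_legendreSym_ne (p := p) (m := 1) (n := 1) (v := 2)
    (by omega) ht (hde.trans hD) ?_ ?_ ?_ (by simpa using h) <;> simp [h2]

theorem isFundamental_mk {d x y : ℤ} (hd : 0 < d) (hx : 0 < x) (hy : 0 < y)
    (hxy : x ^ 2 - d * y ^ 2 = 1)
    (hmin : ∀ a b : ℤ, 0 < a → 0 < b → a ^ 2 - d * b ^ 2 = 1 → x ≤ a) :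
    IsFundamental (Solution₁.mk x y hxy) := by
  have hx₁ : 1 < x := by nlinarith [mul_pos hd (pow_pos hy 2)]
  refine ⟨hx₁, hy, fun {b} hb ↦ hmin b.x |b.y| (by omega) ?_ ?_⟩
  · exact abs_pos.2 (Solution₁.y_ne_zero_of_one_lt_x hb)
  · rw [sq_abs, b.prop]

end Pell

section Residues

variable {q r s : ℕ} [Fact q.Prime] [Fact r.Prime] [Fact s.Prime]

theorem odd_x_of_residues (hr8 : r % 8 = 5) (hqr : legendreSym r q = 1)
    (hsr : legendreSym r s = 1) {g : Solution₁ ((q * r * s : ℕ) : ℤ)} (hg : 1 < g.x) :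
    Odd g.x := by
  refine odd_x_of_forall_prime_dvd_legendreSym (p := r) (t := q * s) hr8
    (fun l hl hdvd ↦ ?_) (by ring) hg
  rcases hl.dvd_mul.1 hdvd with h | h
  · rwa [(Nat.prime_dvd_prime_iff_eq hl Fact.out).1 h]
  · rwa [(Nat.prime_dvd_prime_iff_eq hl Fact.out).1 h]

theorem PellSplitting.exists_right_eq_of_mod_four {x : ℤ} {d e : ℕ} (hq4 : q % 4 = 3)
    (hr4 : r % 4 = 1) (hs4 : s % 4 = 1) (h : PellSplitting (q * r * s) x d e) :
    ∃ f, e = q * f ∧ d * f = r * s := by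
  obtain ⟨a, b, hab⟩ := h.exists_mul_sq_sub_mul_sq_eq_one
  refine (mul_eq_prime_mul_cases Fact.out (h.mul_eq.trans (mul_assoc q r s))).resolve_left ?_
  rintro ⟨f, rfl, hf⟩
  have hrs4 : r * s % 4 = 1 := by simp [Nat.mul_mod, hr4, hs4]
  have hfe4 : f % 4 = 1 ∧ e % 4 = 1 := by
    rcases mul_eq_prime_mul_prime_cases Fact.out Fact.out hf with
      ⟨rfl, rfl⟩ | ⟨rfl, rfl⟩ | ⟨rfl, rfl⟩ | ⟨rfl, rfl⟩ <;> omega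
  have hqf4 : q * f % 4 = 3 := by simp [Nat.mul_mod, hq4, hfe4.1]
  exact mod_four_ne_three_of_mul_sq_sub_mul_sq_eq_one hab (by omega) (by omega)

theorem isSquare_cases_of_residues (hq4 : q % 4 = 3) (hr8 : r % 8 = 5) (hs4 : s % 4 = 1)
    (hqr : legendreSym r q = 1) (hsr : legendreSym r s = 1)
    {g : Solution₁ ((q * r * s : ℕ) : ℤ)} (hg : IsFundamental g) :
    IsSquare (2 * q * (g.x - 1)) ∨ IsSquare (2 * r * (g.x + 1)) ∨ IsSquare (2 * s * (g.x + 1)) := by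
  have hD : q * r * s % 2 = 1 := by
    simp [Nat.mul_mod, show q % 2 = 1 by omega, show r % 2 = 1 by omega, show s % 2 = 1 by omega]
  obtain ⟨d, e, h⟩ := exists_pellSplitting (by omega) hg.x_pos
    (odd_x_of_residues hr8 hqr hsr hg.1)
  obtain ⟨f, rfl, hf⟩ := h.exists_right_eq_of_mod_four hq4 (by omega) hs4
  rcases mul_eq_prime_mul_prime_cases Fact.out Fact.out hf with
    ⟨rfl, -⟩ | ⟨rfl, -⟩ | ⟨rfl, -⟩ | ⟨-, rfl⟩
  · exact absurd rfl (h.left_ne_one_of_isFundamental hg)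
  · exact .inr (.inl h.isSquare_add_one)
  · exact .inr (.inr h.isSquare_add_one)
  · exact .inl (by simpa using h.isSquare_sub_one)

theorem not_isSquare_and_isSquare_sub_one_add_one {q r s : ℕ} {x y : ℤ} (hq : q ≠ 0) (hr : r ≠ 0)
    (hs : s.Prime) (hy : y ≠ 0) (h : x ^ 2 - (q * r * s : ℕ) * y ^ 2 = 1) :
    ¬(IsSquare (2 * q * (x - 1)) ∧ IsSquare (2 * r * (x + 1))) := by
  have hs' := Nat.prime_iff_prime_int.1 hs
  refine not_isSquare_and_isSquare (m := 1) (z := 2 * q * r * y) hs' hs'.not_dvd_one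
    (by positivity) ?_
  push_cast at h
  linear_combination (4 * q * r : ℤ) * h

theorem not_isSquare_and_isSquare_of_prime_of_ne {r s : ℕ} {z : ℤ} (hr : r.Prime) (hs : s.Prime)
    (hrs : r ≠ s) (hz : z ≠ 0) : ¬(IsSquare (2 * r * z) ∧ IsSquare (2 * s * z)) :=
  not_isSquare_and_isSquare (z := 2 * z) (Nat.prime_iff_prime_int.1 hr)
    (not_natCast_dvd_of_prime_of_ne hr hs hrs) (by positivity) (by ring)

theorem PellSplitting.exists_left_or_right_eq_of_nonresidue (hr8 : r % 8 = 5)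
    (hqr : legendreSym r q = -1) (hsr : legendreSym r s = 1) {x : ℤ} {d e : ℕ}
    (h : PellSplitting (2 * q * r * s) x d e) :
    (∃ f, d = 2 * (q * f) ∧ f * e = r * s) ∨ (∃ f, e = 2 * (q * f) ∧ d * f = r * s) := by
  obtain ⟨a, b, hab⟩ := h.exists_mul_sq_sub_mul_sq_eq_one
  have h2 := legendreSym_two_of_mod_eight_eq_five hr8
  have hs : ∀ l : ℕ, l.Prime → l ∣ s → legendreSym r l = 1 := fun l hl hls ↦ by
    rwa [(Nat.prime_dvd_prime_iff_eq hl Fact.out).1 hls]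
  have opposite_sides {m n : ℤ} {y z : ℕ} (hm : legendreSym r m = -1) (hn : legendreSym r n = -1)
      (hyz : y * z = r * s) : m * y * a ^ 2 - n * z * b ^ 2 ≠ 1 :=
    mul_sq_sub_mul_sq_ne_of_legendreSym_ne (by omega) hs hyz (by simp)
      (by simp [hm]) (by simp [hn])
  have hde : d * e = 2 * (q * (r * s)) := by rw [h.mul_eq]; ring
  rcases mul_eq_prime_mul_cases Nat.prime_two hde with ⟨y, rfl, hy⟩ | ⟨y, rfl, hy⟩ <;>
    rcases mul_eq_prime_mul_cases Fact.out hy with ⟨z, rfl, hz⟩ | ⟨z, rfl, hz⟩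
  · exact .inl ⟨z, rfl, hz⟩
  · exact absurd (by push_cast at hab; exact hab) (opposite_sides h2 hqr hz)
  · exact absurd (by push_cast at hab; exact hab) (opposite_sides hqr h2 hz)
  · exact .inr ⟨z, rfl, hz⟩

theorem isSquare_cases_of_nonresidue (hq4 : q % 4 = 3) (hr8 : r % 8 = 5) (hs8 : s % 8 = 5)
    (hqr : legendreSym r q = -1) (hsr : legendreSym r s = 1)
    {g : Solution₁ ((2 * q * r * s : ℕ) : ℤ)} (hg : IsFundamental g) :
    IsSquare (q * (g.x - 1)) ∨ IsSquare (2 * r * (g.x - 1)) ∨ IsSquare (2 * s * (g.x - 1)) := by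
  have hr := (Fact.out : r.Prime)
  have hs := (Fact.out : s.Prime)
  have hrs8 : r * s % 8 = 1 := by simp [Nat.mul_mod, hr8, hs8]
  have hD : 2 * q * r * s % 8 = 6 := by
    rw [mul_assoc, mul_assoc]
    exact two_mul_mul_mod_eight hq4 (by omega)
  obtain ⟨d, e, h⟩ := exists_pellSplitting (by omega) hg.x_pos
    (odd_x_of_even (Nat.even_iff.2 (by omega)))
  obtain ⟨a, b, hab⟩ := h.exists_mul_sq_sub_mul_sq_eq_one
  rcases h.exists_left_or_right_eq_of_nonresidue hr8 hqr hsr with ⟨f, rfl, hf⟩ | ⟨f, rfl, hf⟩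
  · have he8 (hf4 : f % 4 = 1) : e % 8 = 5 ∨ e % 8 = 7 := by
      have := two_mul_mul_mod_eight hq4 hf4
      have := mod_eight_of_mul_sq_sub_mul_sq_eq_one_of_left hab (by omega)
      omega
    rcases mul_eq_prime_mul_prime_cases hr hs hf with
      ⟨rfl, rfl⟩ | ⟨rfl, rfl⟩ | ⟨rfl, rfl⟩ | ⟨rfl, rfl⟩
    · omega
    · exact .inr (.inr h.isSquare_sub_one)
    · exact .inr (.inl h.isSquare_sub_one)
    · omega
  · have hd8 (hf4 : f % 4 = 1) : d % 8 = 1 ∨ d % 8 = 7 := by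
      have := two_mul_mul_mod_eight hq4 hf4
      have := mod_eight_of_mul_sq_sub_mul_sq_eq_one_of_right hab (by omega)
      omega
    rcases mul_eq_prime_mul_prime_cases hr hs hf with
      ⟨rfl, rfl⟩ | ⟨rfl, rfl⟩ | ⟨rfl, rfl⟩ | ⟨rfl, rfl⟩
    · exact absurd rfl (h.left_ne_one_of_isFundamental hg)
    · omega
    · omega
    · obtain ⟨c, hc⟩ := h.exists_sub_one_eq
      exact .inl ⟨2 * q * c, by rw [hc]; push_cast; ring⟩

theorem not_isSquare_and_isSquare_of_mod_four {q r : ℕ} {z : ℤ} (hq : q.Prime) (hr : r.Prime)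
    (hq4 : q % 4 = 3) (hr4 : r % 4 = 1) (hz : z ≠ 0) :
    ¬(IsSquare (q * z) ∧ IsSquare (2 * r * z)) := by
  have hr' := Nat.prime_iff_prime_int.1 hr
  refine not_isSquare_and_isSquare (m := 2 * q) hr' (fun h ↦ ?_) hz (by ring)
  rcases hr'.dvd_or_dvd h with h | h
  · exact not_natCast_dvd_of_prime_of_ne hr Nat.prime_two (by rintro rfl; omega) h
  · exact not_natCast_dvd_of_prime_of_ne hr hq (by rintro rfl; omega) h

theorem exactly_one_isSquare_of_residues (hq4 : q % 4 = 3) (hr8 : r % 8 = 5) (hs4 : s % 4 = 1)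
    (hqr : legendreSym r q = 1) (hsr : legendreSym r s = 1)
    {g : Solution₁ ((q * r * s : ℕ) : ℤ)} (hg : IsFundamental g) :
    let A : Prop := IsSquare (2 * q * (g.x - 1))
    let B : Prop := IsSquare (2 * r * (g.x + 1))
    let C : Prop := IsSquare (2 * s * (g.x + 1))
    (A ∧ ¬B ∧ ¬C) ∨ (¬A ∧ B ∧ ¬C) ∨ (¬A ∧ ¬B ∧ C) := by
  intro A B C
  have hr : r.Prime := Fact.out
  have hs : s.Prime := Fact.out
  have hABC : A ∨ B ∨ C := isSquare_cases_of_residues hq4 hr8 hs4 hqr hsr hg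
  have hAB : ¬(A ∧ B) := not_isSquare_and_isSquare_sub_one_add_one (NeZero.ne q) hr.ne_zero hs
    hg.2.1.ne' g.prop
  have hAC : ¬(A ∧ C) := not_isSquare_and_isSquare_sub_one_add_one (NeZero.ne q) hs.ne_zero hr
    hg.2.1.ne' (mul_right_comm q r s ▸ g.prop)
  have hBC : ¬(B ∧ C) := not_isSquare_and_isSquare_of_prime_of_ne hr hs
    (ne_of_legendreSym_eq_one hsr) (by linarith [hg.1])
  tauto

theorem exactly_one_isSquare_of_nonresidue (hq4 : q % 4 = 3) (hr8 : r % 8 = 5) (hs8 : s % 8 = 5)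
    (hqr : legendreSym r q = -1) (hsr : legendreSym r s = 1)
    {g : Solution₁ ((2 * q * r * s : ℕ) : ℤ)} (hg : IsFundamental g) :
    let A : Prop := IsSquare (q * (g.x - 1))
    let B : Prop := IsSquare (2 * r * (g.x - 1))
    let C : Prop := IsSquare (2 * s * (g.x - 1))
    (A ∧ ¬B ∧ ¬C) ∨ (¬A ∧ B ∧ ¬C) ∨ (¬A ∧ ¬B ∧ C) := by
  intro A B C
  have hq : q.Prime := Fact.out
  have hr : r.Prime := Fact.out
  have hs : s.Prime := Fact.out
  have hz : g.x - 1 ≠ 0 := sub_ne_zero.2 hg.1.ne'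
  have hABC : A ∨ B ∨ C := isSquare_cases_of_nonresidue hq4 hr8 hs8 hqr hsr hg
  have hAB : ¬(A ∧ B) := not_isSquare_and_isSquare_of_mod_four hq hr hq4 (by omega) hz
  have hAC : ¬(A ∧ C) := not_isSquare_and_isSquare_of_mod_four hq hs hq4 (by omega) hz
  have hBC : ¬(B ∧ C) := not_isSquare_and_isSquare_of_prime_of_ne hr hs
    (ne_of_legendreSym_eq_one hsr) hz
  tauto

end Residues

theorem statement_5_general (η q r s : ℕ) [Fact q.Prime] [Fact r.Prime] [Fact s.Prime]
    (hη : η = 1 ∨ η = 2)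
    (hq4 : q % 4 = 3) (hr8 : r % 8 = 5) (hs4 : s % 4 = 1) (hs8 : η = 2 → s % 8 = 5)
    (hqr : legendreSym r q = (-1) ^ (if η = 2 then 1 else 0))
    (hrs : legendreSym s r = 1)
    (γ γ' : ℤ) (hγ : 0 < γ) (hγ' : 0 < γ')
    (hPell : γ ^ 2 - (η * q * r * s : ℕ) * γ' ^ 2 = 1)
    (hfund : ∀ a b : ℤ, 0 < a → 0 < b → a ^ 2 - (η * q * r * s : ℕ) * b ^ 2 = 1 → γ ≤ a) :
    let A : Prop := ∃ t : ℤ, 2 ^ (if η = 1 then 1 else 0) * (q : ℤ) * (γ - 1) = t ^ 2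
    let B : Prop := ∃ t : ℤ, 2 * (r : ℤ) * (γ + (-1) ^ (if η = 2 then 1 else 0)) = t ^ 2
    let C : Prop := ∃ t : ℤ, 2 * (s : ℤ) * (γ + (-1) ^ (if η = 2 then 1 else 0)) = t ^ 2
    (A ∧ ¬B ∧ ¬C) ∨ (¬A ∧ B ∧ ¬C) ∨ (¬A ∧ ¬B ∧ C) := by
  have hsr : legendreSym r s = 1 :=
    hrs ▸ legendreSym.quadratic_reciprocity_one_mod_four (by omega) (by rintro rfl; omega)
  simp only [← isSquare_iff_exists_sq]
  rcases hη with rfl | rfl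
  · simp only [one_mul] at hPell hfund
    have hg := isFundamental_mk (Int.natCast_pos.2 (NeZero.pos (q * r * s))) hγ hγ' hPell hfund
    simpa using exactly_one_isSquare_of_residues hq4 hr8 hs4 hqr hsr hg
  · have hg := isFundamental_mk (Int.natCast_pos.2 (NeZero.pos (2 * q * r * s))) hγ hγ' hPell hfund
    simpa [← sub_eq_add_neg] using exactly_one_isSquare_of_nonresidue hq4 hr8 (hs8 rfl) hqr hsr hg

theorem statement_5 (η q r s : ℕ) [Fact q.Prime] [Fact r.Prime] [Fact s.Prime]
    (hη : η = 1 ∨ η = 2)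
    (hq4 : q % 4 = 3) (hr8 : r % 8 = 5) (hs8 : s % 8 = 5)
    (hqr : legendreSym r q = (-1) ^ (if η = 2 then 1 else 0))
    (hqs : legendreSym s q = (-1) ^ (if η = 2 then 1 else 0))
    (hrs : legendreSym s r = 1)
    (γ γ' : ℤ) (hγ : 0 < γ) (hγ' : 0 < γ')
    (hPell : γ ^ 2 - (η * q * r * s : ℕ) * γ' ^ 2 = 1)
    (hfund : ∀ a b : ℤ, 0 < a → 0 < b → a ^ 2 - (η * q * r * s : ℕ) * b ^ 2 = 1 → γ ≤ a) :
    let A : Prop := ∃ t : ℤ, 2 ^ (if η = 1 then 1 else 0) * (q : ℤ) * (γ - 1) = t ^ 2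
    let B : Prop := ∃ t : ℤ, 2 * (r : ℤ) * (γ + (-1) ^ (if η = 2 then 1 else 0)) = t ^ 2
    let C : Prop := ∃ t : ℤ, 2 * (s : ℤ) * (γ + (-1) ^ (if η = 2 then 1 else 0)) = t ^ 2
    (A ∧ ¬B ∧ ¬C) ∨ (¬A ∧ B ∧ ¬C) ∨ (¬A ∧ ¬B ∧ C) :=
  statement_5_general η q r s hη hq4 hr8 (by omega) (fun _ ↦ hs8) hqr hrs γ γ' hγ hγ' hPell hfund
end

section
/- Let η ∈ {1,2} and let q, r, s be primes with q ≡ 3 (mod 4), r ≡ s ≡ 5 (mod 8), Legendre symbols (q/r) = (q/s) = (−1)^{δ_{η,2}} and (r/s) = 1, and let (γ, γ′) be the fundamental solution of X² − ηqrs·Y² = 1. Then: (a) if 2^{δ_{η,1}}·q·(γ−1) is a perfect square, there exist integers γ₁, γ₂ with ηγ = q·γ₁² + ηrs·γ₂², ηγ′ = 2γ₁γ₂, and η = −q·γ₁² + ηrs·γ₂² (equivalently √(η·ε_{ηqrs}) = γ₁√q + γ₂√(ηrs)); (b) if 2r·(γ+(−1)^{δ_{η,2}}) is a perfect square, there exist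 integers γ₁, γ₂ with ηγ = ηr·γ₁² + qs·γ₂², ηγ′ = 2γ₁γ₂, and η = (−1)^{δ_{η,2}}·ηr·γ₁² + (−1)^{δ_{η,1}}·qs·γ₂² (equivalently √(η·ε_{ηqrs}) = γ₁√(ηr) + γ₂√(qs)); (c) if 2s·(γ+(−1)^{δ_{η,2}}) is a perfect square, there exist integers γ₁, γ₂ with ηγ = ηs·γ₁² + qr·γ₂², ηγ′ = 2γ₁γ₂, and η = (−1)^{δ_{η,2}}·ηs·γ₁² + (−1)^{δ_{η,1}}·qr·γ₂² (equivalently √(η·ε_{ηqrs}) = γ₁√(ηs) + γ₂√(qr)). -/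
/-!
Let `x² - mny² = e²` with `m`, `n` squarefree. If `2m(x - e)` is a square, then `2(x - e) = ma²`,
and the equation becomes `a² · 2(x + e) = n(2y)²`. As `n` is squarefree, `a` divides `2y`, say
`2y = ab`, so that `2(x + e) = nb²`. Now `ab` is even and `nb² - ma² = 4e`, which forces both
`a = 2u` and `b = 2v` to be even. Hence `x + y√(mn) = (u√m + v√n)²`. In case (a) one factors the
radicand with `m = ηq`, `n = rs`, in case (b) with `m = r`, `n = ηqs`, and multiplies by `√η`;
case (c) is (b) with `r` and `s` exchanged.
-/

lemma dvd_of_pow_dvd_squarefree_mul_pow {M : Type*} [CommMonoidWithZero M] [GCDMonoid M]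
    {n w z : M} {k : ℕ} (hn : Squarefree n) (hk : 2 ≤ k) (hw : w ≠ 0)
    (h : w ^ k ∣ n * z ^ k) : w ∣ z := by
  obtain ⟨w', z', hw', hz', hunit⟩ := extract_gcd w z
  have hgcd : gcd w z ≠ 0 := fun h0 ↦ hw ((gcd_eq_zero_iff w z).1 h0).1
  have hcoprime : IsRelPrime (w' ^ k) (z' ^ k) := (gcd_isUnit_iff_isRelPrime.1 hunit).pow
  have hdvd : w' ^ k ∣ n * z' ^ k := by
    rw [← mul_dvd_mul_iff_left (pow_ne_zero k hgcd), mul_left_comm, ← mul_pow, ← mul_pow, ← hw',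
      ← hz']
    exact h
  have hw'_unit : IsUnit w' :=
    hn w' (sq w' ▸ (pow_dvd_pow w' hk).trans (hcoprime.dvd_of_dvd_mul_right hdvd))
  calc w = gcd w z * w' := hw'
    _ ∣ gcd w z := (hw'_unit.mul_right_dvd).2 dvd_rfl
    _ ∣ z := gcd_dvd_right w z

section SquareRoot

variable {R : Type*} [CommRing R] [GCDMonoid R] {m n : R}

lemma two_dvd_and_two_dvd_of_four_dvd_sub (h2 : Prime (2 : R)) (hm : Squarefree m)
    (hn : Squarefree n) {a b : R} (hab : 2 ∣ a * b) (h : 4 ∣ n * b ^ 2 - m * a ^ 2) :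
    2 ∣ a ∧ 2 ∣ b := by
  have two_dvd_of_four_dvd {k c : R} (hk : Squarefree k) (hc : 4 ∣ k * c ^ 2) : 2 ∣ c :=
    dvd_of_pow_dvd_squarefree_mul_pow hk le_rfl h2.ne_zero (by norm_num [hc])
  have four_dvd_mul_sq {k c : R} (hc : 2 ∣ c) : 4 ∣ k * c ^ 2 := by
    obtain ⟨d, rfl⟩ := hc
    exact ⟨k * d ^ 2, by ring⟩
  rcases h2.dvd_or_dvd hab with ha | hb
  · exact ⟨ha, two_dvd_of_four_dvd hn ((dvd_sub_left (four_dvd_mul_sq ha)).1 h)⟩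
  · exact ⟨two_dvd_of_four_dvd hm ((dvd_sub_right (four_dvd_mul_sq hb)).1 h), hb⟩

lemma exists_two_mul_sub_eq_and_two_mul_add_eq (h2 : (2 : R) ≠ 0) (hm : Squarefree m)
    (hn : Squarefree n) {x y e t : R} (hy : y ≠ 0) (hxy : x ^ 2 - m * n * y ^ 2 = e ^ 2)
    (ht : 2 * m * (x - e) = t ^ 2) :
    ∃ a b, 2 * (x - e) = m * a ^ 2 ∧ 2 * (x + e) = n * b ^ 2 ∧ 2 * y = a * b := by
  have : Nontrivial R := ⟨2, 0, h2⟩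
  obtain ⟨a, rfl⟩ : m ∣ t := (hm.dvd_pow_iff_dvd two_ne_zero).1 ⟨2 * (x - e), by rw [← ht]; ring⟩
  have hminus : 2 * (x - e) = m * a ^ 2 :=
    mul_left_cancel₀ hm.ne_zero (by linear_combination ht)
  have hprod : a ^ 2 * (2 * (x + e)) = n * (2 * y) ^ 2 :=
    mul_left_cancel₀ hm.ne_zero (by linear_combination 4 * hxy - 2 * (x + e) * hminus)
  have ha : a ≠ 0 := by
    rintro rfl
    have : n * (2 * y) ^ 2 = 0 := by rw [← hprod]; ring
    simp [hn.ne_zero, h2, hy] at this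
  obtain ⟨b, hb⟩ : a ∣ 2 * y := dvd_of_pow_dvd_squarefree_mul_pow hn le_rfl ha ⟨_, hprod.symm⟩
  refine ⟨a, b, hminus, mul_left_cancel₀ (pow_ne_zero 2 ha) ?_, hb⟩
  rw [hprod, hb]
  ring

lemma exists_eq_mul_sq_add_mul_sq (h2 : Prime (2 : R)) (hm : Squarefree m) (hn : Squarefree n)
    {x y e t : R} (hy : y ≠ 0) (hxy : x ^ 2 - m * n * y ^ 2 = e ^ 2)
    (ht : 2 * m * (x - e) = t ^ 2) :
    ∃ u v, x = m * u ^ 2 + n * v ^ 2 ∧ y = 2 * u * v ∧ e = n * v ^ 2 - m * u ^ 2 := by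
  obtain ⟨a, b, hminus, hplus, hab⟩ :=
    exists_two_mul_sub_eq_and_two_mul_add_eq h2.ne_zero hm hn hy hxy ht
  obtain ⟨⟨u, rfl⟩, v, rfl⟩ := two_dvd_and_two_dvd_of_four_dvd_sub h2 hm hn ⟨y, hab.symm⟩
    ⟨e, by linear_combination hminus - hplus⟩
  have h4 : (2 * 2 : R) ≠ 0 := mul_ne_zero h2.ne_zero h2.ne_zero
  exact ⟨u, v, mul_left_cancel₀ h4 (by linear_combination hminus + hplus),
    mul_left_cancel₀ h2.ne_zero (by linear_combination hab),
    mul_left_cancel₀ h4 (by linear_combination hplus - hminus)⟩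

variable {η q r s x y t : R}

lemma exists_mul_eq_mul_sq_add_mul_sq_left (h2 : Prime (2 : R))
    (hd : Squarefree (η * q * r * s)) (hy : y ≠ 0) (hxy : x ^ 2 - η * q * r * s * y ^ 2 = 1)
    (ht : 2 * (η * q) * (x - 1) = t ^ 2) :
    ∃ u v, η * x = q * u ^ 2 + η * r * s * v ^ 2 ∧ η * y = 2 * u * v ∧
      η = -q * u ^ 2 + η * r * s * v ^ 2 := by
  obtain ⟨u, v, hx, hy, he⟩ := exists_eq_mul_sq_add_mul_sq h2 (m := η * q) (n := r * s)
    (hd.squarefree_of_dvd ⟨r * s, by ring⟩) (hd.squarefree_of_dvd ⟨η * q, by ring⟩)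
    hy (e := 1) (by linear_combination hxy) ht
  exact ⟨η * u, v, by linear_combination η * hx, by linear_combination η * hy,
    by linear_combination η * he⟩

lemma exists_mul_eq_mul_sq_add_mul_sq_right {ε : R} (h2 : Prime (2 : R))
    (hd : Squarefree (η * q * r * s)) (hε : ε ^ 2 = 1) (hy : y ≠ 0)
    (hxy : x ^ 2 - η * q * r * s * y ^ 2 = 1) (ht : 2 * r * (x + ε) = t ^ 2) :
    ∃ u v, η * x = η * r * u ^ 2 + q * s * v ^ 2 ∧ η * y = 2 * u * v ∧
      η = ε * η * r * u ^ 2 + -ε * q * s * v ^ 2 := by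
  obtain ⟨u, v, hx, hy, he⟩ := exists_eq_mul_sq_add_mul_sq h2 (m := r) (n := η * q * s)
    (hd.squarefree_of_dvd ⟨η * q * s, by ring⟩) (hd.squarefree_of_dvd ⟨r, by ring⟩)
    hy (x := x) (e := -ε) (t := t) (by linear_combination hxy - hε) (by linear_combination ht)
  exact ⟨u, η * v, by linear_combination η * hx, by linear_combination η * hy,
    by linear_combination -η * ε * he - η * hε⟩

end SquareRoot

lemma squarefree_prod_of_nodup_of_prime {l : List ℕ} (hnodup : l.Nodup)
    (hprime : ∀ p ∈ l, p.Prime) : Squarefree l.prod := by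
  have hne : l.prod ≠ 0 := List.prod_ne_zero fun h0 ↦ Nat.not_prime_zero (hprime 0 h0)
  rw [Nat.squarefree_iff_nodup_primeFactorsList hne]
  exact (Nat.primeFactorsList_unique rfl hprime).nodup_iff.1 hnodup

lemma squarefree_mul_mul_mul_of_nodup {η q r s : ℕ} (hη : η ∣ 2) (hnodup : [2, q, r, s].Nodup)
    (hq : q.Prime) (hr : r.Prime) (hs : s.Prime) : Squarefree (η * q * r * s) := by
  have hsq : Squarefree [2, q, r, s].prod :=
    squarefree_prod_of_nodup_of_prime hnodup (by simp [Nat.prime_two, hq, hr, hs])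
  refine hsq.squarefree_of_dvd ?_
  simpa [mul_assoc] using mul_dvd_mul_right hη (q * (r * s))

lemma ne_of_legendreSym_ne_zero {p a : ℕ} [Fact p.Prime] (h : legendreSym p a ≠ 0) : a ≠ p := by
  rintro rfl
  exact h ((legendreSym.eq_zero_iff a a).2 (by simp))

theorem statement_6_general (η q r s : ℕ) (hη : η = 1 ∨ η = 2)
    (hd : Squarefree (η * q * r * s)) (γ γ' : ℤ) (hγ' : γ' ≠ 0)
    (hPell : γ ^ 2 - (η * q * r * s : ℕ) * γ' ^ 2 = 1) :
    ((∃ t : ℤ, 2 ^ (if η = 1 then 1 else 0) * (q : ℤ) * (γ - 1) = t ^ 2) →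
      ∃ γ₁ γ₂ : ℤ,
        (η : ℤ) * γ = q * γ₁ ^ 2 + (η : ℤ) * r * s * γ₂ ^ 2 ∧
        (η : ℤ) * γ' = 2 * γ₁ * γ₂ ∧
        (η : ℤ) = -(q : ℤ) * γ₁ ^ 2 + (η : ℤ) * r * s * γ₂ ^ 2) ∧
    ((∃ t : ℤ, 2 * (r : ℤ) * (γ + (-1) ^ (if η = 2 then 1 else 0)) = t ^ 2) →
      ∃ γ₁ γ₂ : ℤ,
        (η : ℤ) * γ = (η : ℤ) * r * γ₁ ^ 2 + (q : ℤ) * s * γ₂ ^ 2 ∧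
        (η : ℤ) * γ' = 2 * γ₁ * γ₂ ∧
        (η : ℤ) = (-1) ^ (if η = 2 then 1 else 0) * (η : ℤ) * r * γ₁ ^ 2 +
          (-1) ^ (if η = 1 then 1 else 0) * (q : ℤ) * s * γ₂ ^ 2) ∧
    ((∃ t : ℤ, 2 * (s : ℤ) * (γ + (-1) ^ (if η = 2 then 1 else 0)) = t ^ 2) →
      ∃ γ₁ γ₂ : ℤ,
        (η : ℤ) * γ = (η : ℤ) * s * γ₁ ^ 2 + (q : ℤ) * r * γ₂ ^ 2 ∧
        (η : ℤ) * γ' = 2 * γ₁ * γ₂ ∧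
        (η : ℤ) = (-1) ^ (if η = 2 then 1 else 0) * (η : ℤ) * s * γ₁ ^ 2 +
          (-1) ^ (if η = 1 then 1 else 0) * (q : ℤ) * r * γ₂ ^ 2) := by
  have hd_int : Squarefree (η * q * r * s : ℤ) := mod_cast Int.squarefree_natCast.2 hd
  have hsign : (-1 : ℤ) ^ (if η = 1 then 1 else 0) = -(-1) ^ (if η = 2 then 1 else 0) := by
    rcases hη with rfl | rfl <;> rfl
  have hη_sq : 2 * (η : ℤ) = 2 ^ (if η = 1 then 1 else 0) * η ^ 2 := by
    rcases hη with rfl | rfl <;> rfl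
  have hε : ((-1 : ℤ) ^ (if η = 2 then 1 else 0)) ^ 2 = 1 := by
    rw [pow_right_comm, neg_one_sq, one_pow]
  push_cast at hPell
  rw [hsign]
  refine ⟨fun ⟨t, ht⟩ ↦ ?_, fun ⟨t, ht⟩ ↦ ?_, fun ⟨t, ht⟩ ↦ ?_⟩
  · exact exists_mul_eq_mul_sq_add_mul_sq_left Int.prime_two hd_int hγ' hPell (t := η * t)
      (by linear_combination (q : ℤ) * (γ - 1) * hη_sq + (η : ℤ) ^ 2 * ht)
  · exact exists_mul_eq_mul_sq_add_mul_sq_right Int.prime_two hd_int hε hγ' hPell ht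
  · rw [mul_right_comm (η * q : ℤ)] at hd_int hPell
    exact exists_mul_eq_mul_sq_add_mul_sq_right Int.prime_two hd_int hε hγ' hPell ht

theorem statement_6 (η q r s : ℕ) [Fact q.Prime] [Fact r.Prime] [Fact s.Prime]
    (hη : η = 1 ∨ η = 2)
    (hq4 : q % 4 = 3) (hr8 : r % 8 = 5) (hs8 : s % 8 = 5)
    (hqr : legendreSym r q = (-1) ^ (if η = 2 then 1 else 0))
    (hqs : legendreSym s q = (-1) ^ (if η = 2 then 1 else 0))
    (hrs : legendreSym s r = 1)
    (γ γ' : ℤ) (hγ : 0 < γ) (hγ' : 0 < γ')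
    (hPell : γ ^ 2 - (η * q * r * s : ℕ) * γ' ^ 2 = 1)
    (hfund : ∀ a b : ℤ, 0 < a → 0 < b → a ^ 2 - (η * q * r * s : ℕ) * b ^ 2 = 1 → γ ≤ a) :
    ((∃ t : ℤ, 2 ^ (if η = 1 then 1 else 0) * (q : ℤ) * (γ - 1) = t ^ 2) →
      ∃ γ₁ γ₂ : ℤ,
        (η : ℤ) * γ = q * γ₁ ^ 2 + (η : ℤ) * r * s * γ₂ ^ 2 ∧
        (η : ℤ) * γ' = 2 * γ₁ * γ₂ ∧
        (η : ℤ) = -(q : ℤ) * γ₁ ^ 2 + (η : ℤ) * r * s * γ₂ ^ 2) ∧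
    ((∃ t : ℤ, 2 * (r : ℤ) * (γ + (-1) ^ (if η = 2 then 1 else 0)) = t ^ 2) →
      ∃ γ₁ γ₂ : ℤ,
        (η : ℤ) * γ = (η : ℤ) * r * γ₁ ^ 2 + (q : ℤ) * s * γ₂ ^ 2 ∧
        (η : ℤ) * γ' = 2 * γ₁ * γ₂ ∧
        (η : ℤ) = (-1) ^ (if η = 2 then 1 else 0) * (η : ℤ) * r * γ₁ ^ 2 +
          (-1) ^ (if η = 1 then 1 else 0) * (q : ℤ) * s * γ₂ ^ 2) ∧
    ((∃ t : ℤ, 2 * (s : ℤ) * (γ + (-1) ^ (if η = 2 then 1 else 0)) = t ^ 2) →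
      ∃ γ₁ γ₂ : ℤ,
        (η : ℤ) * γ = (η : ℤ) * s * γ₁ ^ 2 + (q : ℤ) * r * γ₂ ^ 2 ∧
        (η : ℤ) * γ' = 2 * γ₁ * γ₂ ∧
        (η : ℤ) = (-1) ^ (if η = 2 then 1 else 0) * (η : ℤ) * s * γ₁ ^ 2 +
          (-1) ^ (if η = 1 then 1 else 0) * (q : ℤ) * r * γ₂ ^ 2) := by
  have hrs_ne : r ≠ s := ne_of_legendreSym_ne_zero (by simp [hrs])
  have hnodup : [2, q, r, s].Nodup := by grind
  exact statement_6_general η q r s hη (squarefree_mul_mul_mul_of_nodup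
    ((Nat.dvd_prime Nat.prime_two).2 hη) hnodup Fact.out Fact.out Fact.out) γ γ' hγ'.ne' hPell
end

section
/- Let q, r, s be prime numbers with q ≡ 3 (mod 4), r ≡ s ≡ 5 (mod 8), and Legendre symbols (q/r) = (q/s) = 1. Then there do not exist integers γ, γ₁, γ₂ satisfying γ + 1 = 2q·γ₁² and γ − 1 = 2rs·γ₂². -/
/-!
Eliminating `γ` leaves `q γ₁² - r s γ₂² = 1`, where `q ≡ -1` and `r s ≡ 1` modulo `4`. Hence
`γ₁² + γ₂² ≡ 3` modulo `4`, whereas a sum of two squares is only ever `0`, `1` or `2` modulo `4`.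
-/

theorem zmod_four_sq_add_sq_ne_three (x y : ZMod 4) : x ^ 2 + y ^ 2 ≠ 3 := by
  decide +revert

theorem mul_sq_sub_mul_sq_ne_one {q n : ℤ} (hq : q ≡ 3 [ZMOD 4]) (hn : n ≡ 1 [ZMOD 4])
    (x y : ℤ) : q * x ^ 2 - n * y ^ 2 ≠ 1 := by
  intro h
  have hq' : (q : ZMod 4) = -1 := mod_cast
    (ZMod.intCast_eq_intCast_iff q (-1) 4).2 (hq.trans (by decide))
  have hn' : (n : ZMod 4) = 1 := mod_cast (ZMod.intCast_eq_intCast_iff n 1 4).2 hn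
  have hmod : (q : ZMod 4) * x ^ 2 - n * y ^ 2 = 1 := by
    exact_mod_cast congrArg (Int.cast (R := ZMod 4)) h
  rw [hq', hn'] at hmod
  have hsum : (x : ZMod 4) ^ 2 + (y : ZMod 4) ^ 2 = -1 := by linear_combination -hmod
  exact zmod_four_sq_add_sq_ne_three x y hsum

theorem statement_14_general {q n : ℤ} (hq : q ≡ 3 [ZMOD 4]) (hn : n ≡ 1 [ZMOD 4]) :
    ¬ ∃ γ γ₁ γ₂ : ℤ, γ + 1 = 2 * q * γ₁ ^ 2 ∧ γ - 1 = 2 * n * γ₂ ^ 2 := by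
  rintro ⟨γ, γ₁, γ₂, hadd, hsub⟩
  exact mul_sq_sub_mul_sq_ne_one hq hn γ₁ γ₂ (by linarith)

theorem statement_14 (q r s : ℕ) [Fact q.Prime] [Fact r.Prime] [Fact s.Prime]
    (hq4 : q % 4 = 3) (hr8 : r % 8 = 5) (hs8 : s % 8 = 5)
    (hqr : legendreSym r q = 1) (hqs : legendreSym s q = 1) :
    ¬ ∃ γ γ₁ γ₂ : ℤ, γ + 1 = 2 * (q : ℤ) * γ₁ ^ 2 ∧ γ - 1 = 2 * (r : ℤ) * s * γ₂ ^ 2 := by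
  have hrs : (r * s : ℤ) ≡ 1 * 1 [ZMOD 4] := .mul (by grind [Int.ModEq]) (by grind [Int.ModEq])
  simpa only [mul_assoc] using statement_14_general (by grind [Int.ModEq]) hrs
end

section
/- Let q, r, s be prime numbers with q ≡ 3 (mod 4), r ≡ s ≡ 5 (mod 8), and Legendre symbol (q/s) = 1. Then for each e ∈ {1, −1}, there do not exist integers γ, γ₁, γ₂ satisfying γ + e = q·γ₁² and γ − e = rs·γ₂². -/
/-!
Modulo `s` the second equation says `γ = e`, so the first becomes `2e = qγ₁²`, and `2eq = (qγ₁)²`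
is a square modulo `s`. But when `s ≡ 5 (mod 8)`, `-1` is a quadratic residue modulo `s` and `2` is
not, so `2eq` is a nonresidue whenever `e = ±1` and `q` is a residue.
-/

lemma isSquare_two_mul_mul_of_add_eq_mul_sq {R : Type*} [CommRing R] {γ e q x : R}
    (hadd : γ + e = q * x ^ 2) (hsub : γ - e = 0) : IsSquare (2 * e * q) :=
  ⟨q * x, by linear_combination q * hadd - q * hsub⟩

lemma legendreSym_two_eq_neg_one {p : ℕ} [Fact p.Prime] (hp : p % 8 = 3 ∨ p % 8 = 5) :
    legendreSym p 2 = -1 := by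
  refine (legendreSym.eq_neg_one_iff p).2 ?_
  rw [Int.cast_ofNat, ZMod.exists_sq_eq_two_iff (by lia)]
  lia

lemma legendreSym_eq_one_of_isUnit {p : ℕ} [Fact p.Prime] (hp : p % 4 = 1) {e : ℤ}
    (he : IsUnit e) : legendreSym p e = 1 := by
  rcases Int.isUnit_iff.1 he with rfl | rfl
  · exact legendreSym.at_one p
  · rw [legendreSym.at_neg_one (by lia), ZMod.χ₄_nat_one_mod_four hp]

theorem statement_15_general (n : ℕ) (q r e : ℤ) (h : ¬ IsSquare ((2 * e * q : ℤ) : ZMod n)) :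
    ¬ ∃ γ γ₁ γ₂ : ℤ, γ + e = q * γ₁ ^ 2 ∧ γ - e = r * n * γ₂ ^ 2 := by
  rintro ⟨γ, γ₁, γ₂, hadd, hsub⟩
  have hadd_mod : (γ + e : ZMod n) = q * γ₁ ^ 2 := mod_cast congrArg (Int.cast : ℤ → ZMod n) hadd
  have hsub_mod : (γ - e : ZMod n) = 0 := by
    simpa using congrArg (Int.cast : ℤ → ZMod n) hsub
  exact h (mod_cast isSquare_two_mul_mul_of_add_eq_mul_sq hadd_mod hsub_mod)

theorem statement_15 (q r s : ℕ) [Fact q.Prime] [Fact r.Prime] [Fact s.Prime]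
    (hq4 : q % 4 = 3) (hr8 : r % 8 = 5) (hs8 : s % 8 = 5)
    (hqs : legendreSym s q = 1) :
    ∀ e : ℤ, e = 1 ∨ e = -1 →
      ¬ ∃ γ γ₁ γ₂ : ℤ, γ + e = (q : ℤ) * γ₁ ^ 2 ∧ γ - e = (r : ℤ) * s * γ₂ ^ 2 := by
  refine fun e he ↦ statement_15_general s q r e ((legendreSym.eq_neg_one_iff s).1 ?_)
  rw [legendreSym.mul, legendreSym.mul, legendreSym_two_eq_neg_one (.inr hs8),
    legendreSym_eq_one_of_isUnit (by lia) (Int.isUnit_iff.2 he), hqs, mul_one, mul_one]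
end
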